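/- (Curvature of the prolonged Liouville connection) For smooth A₀, A₁, A₂, A₃ the 6×6 matrix-valued function ∂ₓΩ₂ − ∂_yΩ₁ + Ω₁Ω₂ − Ω₂Ω₁ on U has its first five rows identically zero, and its sixth row is equal to the vector V = (V₁, V₂, V₃, V₄, V₅, V₆). -/

import Mathlib

/-!
The curvature identity is an identity of differential polynomials in `A₀, …, A₃`. On the open set
`U` the partial derivatives `pdx`, `pdy` of a smooth function are the values of its Fréchet
derivative on `(1, 0)` and `(0, 1)`; hence they preserve smoothness (`contDiffOn_pdx`,
`contDiffOn_pdy`), obey the sum and Leibniz rules, and commute (`pdy_pdx_comm`, `pdy_pdx_pdx`, by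
symmetry of the second derivative). Expanding every entry of `∂ₓΩ₂ − ∂_yΩ₁ + [Ω₁, Ω₂]` with these
rules and writing each mixed derivative as `∂ₓ ⋯ ∂ₓ ∂_y ⋯ ∂_y`, both sides become polynomials in
the values at `p` of the derivatives of the `Aᵢ` of order at most three, and these polynomials
coincide.
-/

noncomputable section

open Matrix

/-- Partial derivative in the first (x) variable. -/
def pdx (f : ℝ × ℝ → ℝ) : ℝ × ℝ → ℝ :=
  fun p => deriv (fun t => f (t, p.2)) p.1

/-- Partial derivative in the second (y) variable. -/
def pdy (f : ℝ × ℝ → ℝ) : ℝ × ℝ → ℝ :=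
  fun p => deriv (fun t => f (p.1, t)) p.2

/-- `pd 0 = ∂ₓ`, `pd 1 = ∂_y`. -/
def pd : Fin 2 → (ℝ × ℝ → ℝ) → (ℝ × ℝ → ℝ) := ![pdx, pdy]

/-- The Liouville linear system associated to `(A0, A1, A2, A3)`, holding on `U`. -/
def LiouvilleSystem (U : Set (ℝ × ℝ)) (A0 A1 A2 A3 ψ1 ψ2 ψ3 : ℝ × ℝ → ℝ) : Prop :=
  ∀ p ∈ U,
    pdx ψ1 p = (2/3) * A1 p * ψ1 p - 2 * A0 p * ψ2 p ∧
    pdy ψ3 p = 2 * A3 p * ψ2 p - (2/3) * A2 p * ψ3 p ∧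
    pdy ψ1 p + 2 * pdx ψ2 p
      = (4/3) * A2 p * ψ1 p - (2/3) * A1 p * ψ2 p - 2 * A0 p * ψ3 p ∧
    pdx ψ3 p + 2 * pdy ψ2 p
      = 2 * A3 p * ψ1 p - (4/3) * A1 p * ψ3 p + (2/3) * A2 p * ψ2 p

/-- `(A0, A1, A2, A3)` is metrisable near `p` (within `U`). -/
def MetrisableNear (U : Set (ℝ × ℝ)) (A0 A1 A2 A3 : ℝ × ℝ → ℝ) (p : ℝ × ℝ) : Prop :=
  ∃ V : Set (ℝ × ℝ), IsOpen V ∧ p ∈ V ∧ V ⊆ U ∧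
    ∃ E F G : ℝ × ℝ → ℝ,
      ContDiffOn ℝ (⊤ : ℕ∞) E V ∧ ContDiffOn ℝ (⊤ : ℕ∞) F V ∧ ContDiffOn ℝ (⊤ : ℕ∞) G V ∧
      (∀ q ∈ V, E q * G q - (F q) ^ 2 ≠ 0) ∧
      (∀ q ∈ V,
        A0 q = (E q * pdy E q - 2 * E q * pdx F q + F q * pdx E q)
                 / (2 * (E q * G q - (F q) ^ 2)) ∧
        A1 q = (3 * F q * pdy E q + G q * pdx E q - 2 * F q * pdx F q - 2 * E q * pdx G q)
                 / (2 * (E q * G q - (F q) ^ 2)) ∧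
        A2 q = (2 * F q * pdy F q + 2 * G q * pdy E q - 3 * F q * pdx G q - E q * pdy G q)
                 / (2 * (E q * G q - (F q) ^ 2)) ∧
        A3 q = (2 * G q * pdy F q - G q * pdx G q - F q * pdy G q)
                 / (2 * (E q * G q - (F q) ^ 2)))

end

noncomputable section

/-- Liouville's first projective invariant `L₁`. -/
def Lio1 (A0 A1 A2 A3 : ℝ × ℝ → ℝ) : ℝ × ℝ → ℝ := fun p =>
  (2/3) * pdx (pdy A1) p - (1/3) * pdx (pdx A2) p - pdy (pdy A0) p
    + A0 p * pdy A2 p + A2 p * pdy A0 p - A3 p * pdx A0 p - 2 * A0 p * pdx A3 p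
    - (2/3) * A1 p * pdy A1 p + (1/3) * A1 p * pdx A2 p

/-- Liouville's second projective invariant `L₂`. -/
def Lio2 (A0 A1 A2 A3 : ℝ × ℝ → ℝ) : ℝ × ℝ → ℝ := fun p =>
  (2/3) * pdx (pdy A2) p - (1/3) * pdy (pdy A1) p - pdx (pdx A3) p
    - A3 p * pdx A1 p - A1 p * pdx A3 p + A0 p * pdy A3 p + 2 * A3 p * pdy A0 p
    + (2/3) * A2 p * pdx A2 p - (1/3) * A2 p * pdy A1 p

/-- The row vector `V = (V₁,…,V₆)`. -/
def Vrow (A0 A1 A2 A3 : ℝ × ℝ → ℝ) : ℝ × ℝ → Fin 6 → ℝ := fun p =>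
  ![2 * pdy (Lio2 A0 A1 A2 A3) p + 4 * A2 p * Lio2 A0 A1 A2 A3 p
      + 8 * A3 p * Lio1 A0 A1 A2 A3 p,
    -2 * pdy (Lio1 A0 A1 A2 A3) p - 2 * pdx (Lio2 A0 A1 A2 A3) p
      - (4/3) * A1 p * Lio2 A0 A1 A2 A3 p + (4/3) * A2 p * Lio1 A0 A1 A2 A3 p,
    2 * pdx (Lio1 A0 A1 A2 A3) p - 8 * A0 p * Lio2 A0 A1 A2 A3 p
      - 4 * A1 p * Lio1 A0 A1 A2 A3 p,
    -5 * Lio2 A0 A1 A2 A3 p,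
    -5 * Lio1 A0 A1 A2 A3 p,
    0]

/-- The connection matrix `Ω₁`. -/
def Om1 (A0 A1 A2 A3 : ℝ × ℝ → ℝ) : ℝ × ℝ → Matrix (Fin 6) (Fin 6) ℝ := fun p =>
  Matrix.of
  ![![-(2/3) * A1 p, 2 * A0 p, 0, 0, 0, 0],
    ![0, 0, 0, -(1/2 : ℝ), 0, 0],
    ![-2 * A3 p, -(2/3) * A2 p, (4/3) * A1 p, 0, 1, 0],
    ![-(4/3) * pdx A2 p + 4 * A0 p * A3 p + (2/3) * pdy A1 p,
      -2 * pdy A0 p + (2/3) * pdx A1 p + 4 * A2 p * A0 p - (4/9) * (A1 p) ^ 2,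
      2 * pdx A0 p - 4 * A0 p * A1 p,
      -(1/3) * A1 p, -3 * A0 p, 0],
    ![0, 0, 0, 0, 0, -1],
    ![-(4/3) * pdx (pdy A2) p - (20/3) * A0 p * A2 p * A3 p + (2/3) * pdy (pdy A1) p
        + 4 * A3 p * pdy A0 p - 2 * A0 p * pdy A3 p - (16/9) * A2 p * pdx A2 p
        + (8/9) * A2 p * pdy A1 p,
      (2/3) * pdx (pdy A1) p - (4/3) * A1 p * pdy A1 p + 2 * A0 p * pdy A2 p
        - 2 * pdy (pdy A0) p + 4 * A2 p * pdy A0 p + 4 * A3 p * pdx A0 p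
        + 6 * A0 p * pdx A3 p + (8/9) * A1 p * pdx A2 p
        + (4/3) * A0 p * A1 p * A3 p - (4/3) * A0 p * (A2 p) ^ 2,
      2 * pdx (pdy A0) p + (2/3) * A0 p * pdx A2 p - (4/3) * A2 p * pdx A0 p
        - 4 * A1 p * pdy A0 p - (4/3) * A0 p * pdy A1 p
        + (8/3) * A0 p * A1 p * A2 p + 4 * A3 p * (A0 p) ^ 2,
      (4/3) * pdx A2 p - pdy A1 p + 5 * A0 p * A3 p,
      (1/3) * pdx A1 p - 4 * pdy A0 p + 3 * A2 p * A0 p - (2/9) * (A1 p) ^ 2,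
      -(1/3) * A1 p]]

/-- The connection matrix `Ω₂`. -/
def Om2 (A0 A1 A2 A3 : ℝ × ℝ → ℝ) : ℝ × ℝ → Matrix (Fin 6) (Fin 6) ℝ := fun p =>
  Matrix.of
  ![![-(4/3) * A2 p, (2/3) * A1 p, 2 * A0 p, 1, 0, 0],
    ![0, 0, 0, 0, -(1/2 : ℝ), 0],
    ![0, -2 * A3 p, (2/3) * A2 p, 0, 0, 0],
    ![0, 0, 0, 0, 0, -1],
    ![-2 * pdy A3 p - 4 * A3 p * A2 p,
      2 * pdx A3 p - (2/3) * pdy A2 p + 4 * A1 p * A3 p - (4/9) * (A2 p) ^ 2,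
      (4/3) * pdy A1 p - (2/3) * pdx A2 p + 4 * A0 p * A3 p,
      3 * A3 p, (1/3) * A2 p, 0],
    ![-2 * pdx (pdy A3) p - 4 * A2 p * pdx A3 p - (4/3) * A3 p * pdx A2 p
        + (2/3) * A3 p * pdy A1 p - (4/3) * A1 p * pdy A3 p
        - 4 * A0 p * (A3 p) ^ 2 - (8/3) * A1 p * A2 p * A3 p,
      2 * pdx (pdx A3) p - (4/3) * A2 p * pdx A2 p - (4/3) * A0 p * A2 p * A3 p
        - (2/3) * pdx (pdy A2) p + 4 * A1 p * pdx A3 p + 4 * A0 p * pdy A3 p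
        + 6 * A3 p * pdy A0 p + (4/3) * A3 p * (A1 p) ^ 2 + 2 * A3 p * pdx A1 p
        + (8/9) * A2 p * pdy A1 p,
      -(2/3) * pdx (pdx A2) p + (8/9) * A1 p * pdx A2 p + 4 * A0 p * pdx A3 p
        - 2 * A3 p * pdx A0 p - (16/9) * A1 p * pdy A1 p + (4/3) * pdx (pdy A1) p
        + (20/3) * A0 p * A1 p * A3 p,
      4 * pdx A3 p - (1/3) * pdy A2 p + 3 * A1 p * A3 p - (2/9) * (A2 p) ^ 2,
      pdx A2 p - (4/3) * pdy A1 p + 5 * A0 p * A3 p,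
      (1/3) * A2 p]]

/-- `Ω` indexed by a direction. -/
def Om (A0 A1 A2 A3 : ℝ × ℝ → ℝ) : Fin 2 → ℝ × ℝ → Matrix (Fin 6) (Fin 6) ℝ :=
  ![Om1 A0 A1 A2 A3, Om2 A0 A1 A2 A3]

/-- The operator `D_a W = ∂_a W − W·Ω_a` on row-vector-valued functions. -/
def Dop (A0 A1 A2 A3 : ℝ × ℝ → ℝ) (a : Fin 2) (W : ℝ × ℝ → Fin 6 → ℝ) :
    ℝ × ℝ → Fin 6 → ℝ := fun p =>
  (fun i => pd a (fun q => W q i) p) - Matrix.vecMul (W p) (Om A0 A1 A2 A3 a p)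

/-- Iterated derivative `D_{a₁} ⋯ D_{a_j} W` (the head of the list acts last/outermost). -/
def DIter (A0 A1 A2 A3 : ℝ × ℝ → ℝ) (l : List (Fin 2)) (W : ℝ × ℝ → Fin 6 → ℝ) :
    ℝ × ℝ → Fin 6 → ℝ :=
  l.foldr (Dop A0 A1 A2 A3) W

/-- Symmetrised iterated derivative `D_{(a₁} ⋯ D_{a_j)} V` of the vector `V`. -/
def DSym (A0 A1 A2 A3 : ℝ × ℝ → ℝ) (l : List (Fin 2)) : ℝ × ℝ → Fin 6 → ℝ := fun p =>
  ((l.permutations.length : ℝ))⁻¹ •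
    (l.permutations.map (fun m => DIter A0 A1 A2 A3 m (Vrow A0 A1 A2 A3) p)).sum

/-- The `6 × 6` matrix `M([Γ])` with rows `V, D₁V, D₂V, D₁D₁V, (1/2)(D₁D₂V + D₂D₁V), D₂D₂V`. -/
def Mmat (A0 A1 A2 A3 : ℝ × ℝ → ℝ) : ℝ × ℝ → Matrix (Fin 6) (Fin 6) ℝ := fun p =>
  Matrix.of
  ![Vrow A0 A1 A2 A3 p,
    DIter A0 A1 A2 A3 [0] (Vrow A0 A1 A2 A3) p,
    DIter A0 A1 A2 A3 [1] (Vrow A0 A1 A2 A3) p,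
    DIter A0 A1 A2 A3 [0, 0] (Vrow A0 A1 A2 A3) p,
    (1/2 : ℝ) • (DIter A0 A1 A2 A3 [0, 1] (Vrow A0 A1 A2 A3) p
      + DIter A0 A1 A2 A3 [1, 0] (Vrow A0 A1 A2 A3) p),
    DIter A0 A1 A2 A3 [1, 1] (Vrow A0 A1 A2 A3) p]

end

section PartialDerivatives

variable {f g : ℝ × ℝ → ℝ} {p : ℝ × ℝ} {U : Set (ℝ × ℝ)}

lemma hasDerivAt_slice_x (hf : DifferentiableAt ℝ f p) :
    HasDerivAt (fun t => f (t, p.2)) (fderiv ℝ f p (1, 0)) p.1 :=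
  HasFDerivAt.comp_hasDerivAt p.1 (f := fun t => (t, p.2)) hf.hasFDerivAt
    ((hasDerivAt_id p.1).prodMk (hasDerivAt_const p.1 p.2))

lemma hasDerivAt_slice_y (hf : DifferentiableAt ℝ f p) :
    HasDerivAt (fun t => f (p.1, t)) (fderiv ℝ f p (0, 1)) p.2 :=
  HasFDerivAt.comp_hasDerivAt p.2 (f := fun t => (p.1, t)) hf.hasFDerivAt
    ((hasDerivAt_const p.2 p.1).prodMk (hasDerivAt_id p.2))

lemma pdx_eq_fderiv (hf : DifferentiableAt ℝ f p) : pdx f p = fderiv ℝ f p (1, 0) :=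
  (hasDerivAt_slice_x hf).deriv

lemma pdy_eq_fderiv (hf : DifferentiableAt ℝ f p) : pdy f p = fderiv ℝ f p (0, 1) :=
  (hasDerivAt_slice_y hf).deriv

lemma pdx_const (c : ℝ) : pdx (fun _ => c) p = 0 := by simp [pdx]

lemma pdy_const (c : ℝ) : pdy (fun _ => c) p = 0 := by simp [pdy]

lemma pdx_add (hf : DifferentiableAt ℝ f p) (hg : DifferentiableAt ℝ g p) :
    pdx (fun q => f q + g q) p = pdx f p + pdx g p := by
  rw [pdx_eq_fderiv (hf.fun_add hg), pdx_eq_fderiv hf, pdx_eq_fderiv hg, fderiv_fun_add hf hg]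
  rfl

lemma pdy_add (hf : DifferentiableAt ℝ f p) (hg : DifferentiableAt ℝ g p) :
    pdy (fun q => f q + g q) p = pdy f p + pdy g p := by
  rw [pdy_eq_fderiv (hf.fun_add hg), pdy_eq_fderiv hf, pdy_eq_fderiv hg, fderiv_fun_add hf hg]
  rfl

lemma pdx_sub (hf : DifferentiableAt ℝ f p) (hg : DifferentiableAt ℝ g p) :
    pdx (fun q => f q - g q) p = pdx f p - pdx g p := by
  rw [pdx_eq_fderiv (hf.fun_sub hg), pdx_eq_fderiv hf, pdx_eq_fderiv hg, fderiv_fun_sub hf hg]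
  rfl

lemma pdy_sub (hf : DifferentiableAt ℝ f p) (hg : DifferentiableAt ℝ g p) :
    pdy (fun q => f q - g q) p = pdy f p - pdy g p := by
  rw [pdy_eq_fderiv (hf.fun_sub hg), pdy_eq_fderiv hf, pdy_eq_fderiv hg, fderiv_fun_sub hf hg]
  rfl

lemma pdx_mul (hf : DifferentiableAt ℝ f p) (hg : DifferentiableAt ℝ g p) :
    pdx (fun q => f q * g q) p = pdx f p * g p + f p * pdx g p :=
  ((hasDerivAt_slice_x hf).mul (hasDerivAt_slice_x hg)).deriv.trans <| by
    rw [pdx_eq_fderiv hf, pdx_eq_fderiv hg]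

lemma pdy_mul (hf : DifferentiableAt ℝ f p) (hg : DifferentiableAt ℝ g p) :
    pdy (fun q => f q * g q) p = pdy f p * g p + f p * pdy g p :=
  ((hasDerivAt_slice_y hf).mul (hasDerivAt_slice_y hg)).deriv.trans <| by
    rw [pdy_eq_fderiv hf, pdy_eq_fderiv hg]

lemma pdx_congr (hU : IsOpen U) (hp : p ∈ U) (h : Set.EqOn f g U) : pdx f p = pdx g p := by
  refine Filter.EventuallyEq.deriv_eq ?_
  have hc : ContinuousAt (fun t : ℝ => (t, p.2)) p.1 := by fun_prop
  filter_upwards [hc (hU.mem_nhds hp)] with t ht using h ht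

lemma pdy_congr (hU : IsOpen U) (hp : p ∈ U) (h : Set.EqOn f g U) : pdy f p = pdy g p := by
  refine Filter.EventuallyEq.deriv_eq ?_
  have hc : ContinuousAt (fun t : ℝ => (p.1, t)) p.2 := by fun_prop
  filter_upwards [hc (hU.mem_nhds hp)] with t ht using h ht

lemma differentiableAt_of_smooth (hU : IsOpen U) (hf : ContDiffOn ℝ (⊤ : ℕ∞) f U) (hp : p ∈ U) :
    DifferentiableAt ℝ f p :=
  (hf.contDiffAt (hU.mem_nhds hp)).differentiableAt (by simp)

lemma contDiffOn_pdx (hU : IsOpen U) (hf : ContDiffOn ℝ (⊤ : ℕ∞) f U) :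
    ContDiffOn ℝ (⊤ : ℕ∞) (pdx f) U :=
  ((hf.fderiv_of_isOpen hU (by norm_cast)).clm_apply
    (contDiffOn_const (c := ((1, 0) : ℝ × ℝ)))).congr
    fun _ hq => pdx_eq_fderiv (differentiableAt_of_smooth hU hf hq)

lemma contDiffOn_pdy (hU : IsOpen U) (hf : ContDiffOn ℝ (⊤ : ℕ∞) f U) :
    ContDiffOn ℝ (⊤ : ℕ∞) (pdy f) U :=
  ((hf.fderiv_of_isOpen hU (by norm_cast)).clm_apply
    (contDiffOn_const (c := ((0, 1) : ℝ × ℝ)))).congr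
    fun _ hq => pdy_eq_fderiv (differentiableAt_of_smooth hU hf hq)

/-- Mixed partial derivatives of a smooth function commute. -/
lemma pdy_pdx_comm (hU : IsOpen U) (hf : ContDiffOn ℝ (⊤ : ℕ∞) f U) (hp : p ∈ U) :
    pdy (pdx f) p = pdx (pdy f) p := by
  have hd : DifferentiableAt ℝ (fderiv ℝ f) p :=
    ((hf.fderiv_of_isOpen (m := (⊤ : ℕ∞)) hU (by norm_cast)).contDiffAt
      (hU.mem_nhds hp)).differentiableAt (by simp)
  have hx : Set.EqOn (pdx f) (fun q => fderiv ℝ f q (1, 0)) U := fun q hq =>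
    pdx_eq_fderiv (differentiableAt_of_smooth hU hf hq)
  have hy : Set.EqOn (pdy f) (fun q => fderiv ℝ f q (0, 1)) U := fun q hq =>
    pdy_eq_fderiv (differentiableAt_of_smooth hU hf hq)
  have key := (hf.contDiffAt (hU.mem_nhds hp)).isSymmSndFDerivAt (by simp; norm_cast)
    (1, 0) (0, 1)
  rw [pdy_congr hU hp hx, pdx_congr hU hp hy, pdy_eq_fderiv (by fun_prop),
    pdx_eq_fderiv (by fun_prop), fderiv_clm_apply hd (by fun_prop),
    fderiv_clm_apply hd (by fun_prop)]
  simpa using key.symm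

/-- Third-order form of the commutation of partial derivatives: `∂_y ∂ₓ ∂ₓ = ∂ₓ ∂ₓ ∂_y`. -/
lemma pdy_pdx_pdx (hU : IsOpen U) (hf : ContDiffOn ℝ (⊤ : ℕ∞) f U) (hp : p ∈ U) :
    pdy (pdx (pdx f)) p = pdx (pdx (pdy f)) p :=
  (pdy_pdx_comm hU (contDiffOn_pdx hU hf) hp).trans
    (pdx_congr hU hp fun _ hq => pdy_pdx_comm hU hf hq)

end PartialDerivatives

set_option linter.unusedSimpArgs false in
set_option maxHeartbeats 4000000 in
/-- **Curvature of the prolonged Liouville connection.** The matrix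
`∂ₓΩ₂ − ∂_yΩ₁ + Ω₁Ω₂ − Ω₂Ω₁` has its first five rows zero and sixth row equal to `V`. -/
theorem curvature_rows (U : Set (ℝ × ℝ)) (hU : IsOpen U) (hUconn : IsConnected U)
    (A0 A1 A2 A3 : ℝ × ℝ → ℝ)
    (hA0 : ContDiffOn ℝ (⊤ : ℕ∞) A0 U) (hA1 : ContDiffOn ℝ (⊤ : ℕ∞) A1 U)
    (hA2 : ContDiffOn ℝ (⊤ : ℕ∞) A2 U) (hA3 : ContDiffOn ℝ (⊤ : ℕ∞) A3 U) :
    ∀ p ∈ U, ∀ j : Fin 6,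
      (∀ i : Fin 6, (i : ℕ) < 5 →
        pdx (fun q => Om2 A0 A1 A2 A3 q i j) p - pdy (fun q => Om1 A0 A1 A2 A3 q i j) p
          + (Om1 A0 A1 A2 A3 p * Om2 A0 A1 A2 A3 p
              - Om2 A0 A1 A2 A3 p * Om1 A0 A1 A2 A3 p) i j = 0) ∧
      pdx (fun q => Om2 A0 A1 A2 A3 q 5 j) p - pdy (fun q => Om1 A0 A1 A2 A3 q 5 j) p
        + (Om1 A0 A1 A2 A3 p * Om2 A0 A1 A2 A3 p
            - Om2 A0 A1 A2 A3 p * Om1 A0 A1 A2 A3 p) 5 j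
        = Vrow A0 A1 A2 A3 p j := by
  intro p hp j
  -- All entries are polynomials in the following functions, which are differentiable at `p`.
  have hd : ∀ {f : ℝ × ℝ → ℝ}, ContDiffOn ℝ (⊤ : ℕ∞) f U →
      DifferentiableAt ℝ f p ∧ DifferentiableAt ℝ (pdx f) p ∧ DifferentiableAt ℝ (pdy f) p ∧
        DifferentiableAt ℝ (pdx (pdx f)) p ∧ DifferentiableAt ℝ (pdx (pdy f)) p ∧
        DifferentiableAt ℝ (pdy (pdy f)) p := fun hf =>
    have hx := contDiffOn_pdx hU hf
    have hy := contDiffOn_pdy hU hf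
    ⟨differentiableAt_of_smooth hU hf hp, differentiableAt_of_smooth hU hx hp,
      differentiableAt_of_smooth hU hy hp,
      differentiableAt_of_smooth hU (contDiffOn_pdx hU hx) hp,
      differentiableAt_of_smooth hU (contDiffOn_pdx hU hy) hp,
      differentiableAt_of_smooth hU (contDiffOn_pdy hU hy) hp⟩
  obtain ⟨_, _, _, _, _, _⟩ := hd hA0
  obtain ⟨_, _, _, _, _, _⟩ := hd hA1
  obtain ⟨_, _, _, _, _, _⟩ := hd hA2
  obtain ⟨_, _, _, _, _, _⟩ := hd hA3
  -- Mixed derivatives are brought to the normal form `∂ₓ ⋯ ∂ₓ ∂_y ⋯ ∂_y`.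
  have c2 : ∀ {f : ℝ × ℝ → ℝ}, ContDiffOn ℝ (⊤ : ℕ∞) f U → pdy (pdx f) p = pdx (pdy f) p :=
    fun hf => pdy_pdx_comm hU hf hp
  have c3 : ∀ {f : ℝ × ℝ → ℝ}, ContDiffOn ℝ (⊤ : ℕ∞) f U →
      pdy (pdx (pdx f)) p = pdx (pdx (pdy f)) p :=
    fun hf => pdy_pdx_pdx hU hf hp
  have hy0 := contDiffOn_pdy hU hA0
  have hy1 := contDiffOn_pdy hU hA1
  have hy2 := contDiffOn_pdy hU hA2
  have hy3 := contDiffOn_pdy hU hA3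
  simp only [Matrix.sub_apply, Matrix.mul_apply, Fin.sum_univ_six]
  constructor
  · intro i hi
    fin_cases i <;> fin_cases j <;> try exact absurd hi (by decide)
    all_goals
      simp only [Om1, Om2, pow_two, Matrix.of_apply, Fin.isValue, Fin.mk_one, Fin.zero_eta,
        Fin.reduceFinMk, Matrix.cons_val, Matrix.cons_val_zero, Matrix.cons_val_one]
      simp (disch := fun_prop) only [pdx_const, pdy_const, pdx_add, pdy_add, pdx_sub, pdy_sub,
        pdx_mul, pdy_mul]
      try simp only [c2 hA0, c2 hA1, c2 hA2, c2 hA3]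
      ring
  · fin_cases j
    all_goals
      simp only [Om1, Om2, Vrow, pow_two, Matrix.of_apply, Fin.isValue, Fin.mk_one,
        Fin.zero_eta, Fin.reduceFinMk, Matrix.cons_val, Matrix.cons_val_zero, Matrix.cons_val_one]
      -- `L₁` and `L₂` also occur unapplied, as arguments of `pdx` and `pdy`.
      try delta Lio1
      try delta Lio2
      simp (disch := fun_prop) only [pdx_const, pdy_const, pdx_add, pdy_add, pdx_sub, pdy_sub,
        pdx_mul, pdy_mul]
      try simp only [c2 hA0, c2 hA1, c2 hA2, c2 hA3, c3 hA0, c3 hA1, c3 hA2, c3 hA3,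
        c2 hy0, c2 hy1, c2 hy2, c2 hy3]
      ring
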